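/- arXiv:1811.10913 — 3 statements merged into one kernel-verified Lean document; each statement's English description precedes it below -/
import Mathlib

section
/- The linear bijection φ̄_θ : Ω¹(A_θ) → Ω¹(A) restricts to a bijection from the set Con(A_θ,δ) of connections on the deformed Hopf fibration onto the set Con(A,δ) of connections on the classical Hopf fibration. -/
/-!
The twist map `φ` acts on `A ⊗ A` diagonally with respect to the bidegree, with invertible
eigenvalues `σ p q`, and the twisted product is `m_θ = m ∘ φ`. Hence `φ` carries `Γ¹(A_θ) = ker m_θ`
onto `Γ¹(A) = ker m`; it preserves degrees, and since the Euler operator does too, `v_θ = v ∘ φ`.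
What remains is that `φ` carries `Γ¹(A_θ)²` onto `Γ¹(A)²`, so that `φ̄_θ` is induced by an
isomorphism of pairs. On homogeneous elements `x`, `y` of total `G`-degrees `g`, `h` the cocycle
identity for `σ` gives `φ (x ·_θ y) = σ g h • (φ x * φ y)`, an equality up to a unit, and spans do
not see units. Both kernels are spanned by their homogeneous elements because
`x ↦ x - m x ⊗ 1` is a degree-preserving projection of `A ⊗ A` onto `ker m`.
-/

set_option synthInstance.maxHeartbeats 1000000
set_option maxHeartbeats 1000000

open scoped TensorProduct
noncomputable section

/-- The total-degree-`n` component of a `ℤ²`-graded module. -/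
def totalDeg {A : Type} [AddCommMonoid A] [Module ℂ A]
    (𝒜 : ℤ × ℤ → Submodule ℂ A) (n : ℤ) : Submodule ℂ A :=
  ⨆ (p : ℤ × ℤ) (_ : p.1 + p.2 = n), 𝒜 p

/-- The phase factor `e^{πiθ(m₁m₂' − m₂m₁')}`. -/
def phase (θ : ℝ) (p q : ℤ × ℤ) : ℂ :=
  Complex.exp (Complex.I * ((Real.pi * θ : ℝ) : ℂ) * ((p.1 * q.2 - p.2 * q.1 : ℤ) : ℂ))

/-- The cotriangular structure phase `R_θ(t_u ⊗ t_w) = e^{−2πiθ(u₁w₂ − u₂w₁)}`. -/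
def rphase (θ : ℝ) (u w : ℤ × ℤ) : ℂ :=
  Complex.exp (-(Complex.I * ((2 * Real.pi * θ : ℝ) : ℂ) * ((u.1 * w.2 - u.2 * w.1 : ℤ) : ℂ)))

/-- The `ℤ²`-degree-`p` component of `A ⊗ A`. -/
def tensorDeg {A : Type} [CommRing A] [Algebra ℂ A]
    (𝒜 : ℤ × ℤ → Submodule ℂ A) (p : ℤ × ℤ) : Submodule ℂ (A ⊗[ℂ] A) :=
  Submodule.span ℂ
    {x : A ⊗[ℂ] A | ∃ (q r : ℤ × ℤ), ∃ a ∈ 𝒜 q, ∃ a' ∈ 𝒜 r, q + r = p ∧ x = a ⊗ₜ[ℂ] a'}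

/-- The total-degree-`n` part of `A ⊗ A`. -/
def tensorTotalDeg {A : Type} [CommRing A] [Algebra ℂ A]
    (𝒜 : ℤ × ℤ → Submodule ℂ A) (n : ℤ) : Submodule ℂ (A ⊗[ℂ] A) :=
  ⨆ (p : ℤ × ℤ) (_ : p.1 + p.2 = n), tensorDeg 𝒜 p


section UnitMultiples

variable {R M N P : Type*} [CommSemiring R] [AddCommMonoid M] [Module R M]
  [AddCommMonoid N] [Module R N] [AddCommMonoid P] [Module R P]

theorem span_image_eq_of_eq_unit_smul {α : Type*} {s : Set α} {f g : α → M}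
    (h : ∀ x ∈ s, ∃ c : Rˣ, f x = c • g x) :
    Submodule.span R (f '' s) = Submodule.span R (g '' s) := by
  refine le_antisymm (Submodule.span_le.2 ?_) (Submodule.span_le.2 ?_) <;>
    rintro _ ⟨x, hx, rfl⟩ <;> obtain ⟨c, hc⟩ := h x hx
  · rw [hc]
    exact Submodule.smul_mem _ (c : R) (Submodule.subset_span ⟨x, hx, rfl⟩)
  · rw [← inv_smul_eq_iff.2 hc]
    exact Submodule.smul_mem _ (↑c⁻¹ : R) (Submodule.subset_span ⟨x, hx, rfl⟩)

theorem map₂_eq_of_eq_unit_smul {p : Submodule R M} {q : Submodule R N}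
    {f g : M →ₗ[R] N →ₗ[R] P} (c : Rˣ) (h : ∀ x ∈ p, ∀ y ∈ q, f x y = c • g x y) :
    Submodule.map₂ f p q = Submodule.map₂ g p q := by
  simp only [Submodule.map₂_eq_span_image2, ← Set.image_prod]
  exact span_image_eq_of_eq_unit_smul fun z hz => ⟨c, h z.1 hz.1 z.2 hz.2⟩

end UnitMultiples

section TensorScaling

variable {R ι κ M N : Type*} [CommSemiring R]
  [AddCommMonoid M] [Module R M] [AddCommMonoid N] [Module R N]

/-- The degree-`g` part of the tensor product of two graded modules; a span of elementary
tensors, so that it makes sense without assuming that `ℳ` and `𝒩` are decompositions. -/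
def tensorDegree [Add ι] (ℳ : ι → Submodule R M) (𝒩 : ι → Submodule R N) (g : ι) :
    Submodule R (M ⊗[R] N) :=
  Submodule.span R
    {x | ∃ (i j : ι), ∃ m ∈ ℳ i, ∃ n ∈ 𝒩 j, i + j = g ∧ x = m ⊗ₜ[R] n}

theorem tmul_mem_tensorDegree [Add ι] {ℳ : ι → Submodule R M} {𝒩 : ι → Submodule R N} {i j : ι}
    {m : M} {n : N} (hm : m ∈ ℳ i) (hn : n ∈ 𝒩 j) :
    m ⊗ₜ[R] n ∈ tensorDegree ℳ 𝒩 (i + j) :=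
  Submodule.subset_span ⟨i, j, m, hm, n, hn, rfl, rfl⟩

variable [DecidableEq ι] [DecidableEq κ]
  (ℳ : ι → Submodule R M) [DirectSum.Decomposition ℳ]
  (𝒩 : κ → Submodule R N) [DirectSum.Decomposition 𝒩]

theorem linearMap_ext_of_homogeneous_tmul {P : Type*} [AddCommMonoid P] [Module R P]
    {f g : M ⊗[R] N →ₗ[R] P}
    (h : ∀ i j, ∀ m ∈ ℳ i, ∀ n ∈ 𝒩 j, f (m ⊗ₜ n) = g (m ⊗ₜ n)) : f = g := by
  refine TensorProduct.ext (DirectSum.decompose_lhom_ext ℳ fun i => LinearMap.ext fun m =>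
    DirectSum.decompose_lhom_ext 𝒩 fun j => LinearMap.ext fun n => ?_)
  exact h i j m m.2 n n.2

/-- The isomorphism of `M ⊗ N` with the direct sum of the bidegree pieces `ℳ i ⊗ 𝒩 j`, on which
diagonal maps are defined; the pieces are tensor products of the submodules, not submodules of
`M ⊗ N`. -/
def tensorDecompose : M ⊗[R] N ≃ₗ[R] DirectSum (ι × κ) fun p => ℳ p.1 ⊗[R] 𝒩 p.2 :=
  TensorProduct.congr (DirectSum.decomposeLinearEquiv ℳ) (DirectSum.decomposeLinearEquiv 𝒩) ≪≫ₗ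
    TensorProduct.directSum R R (fun i => ℳ i) (fun j => 𝒩 j)

/-- The diagonal automorphism of `M ⊗ N` multiplying the bidegree-`(i, j)` piece by the unit
`c i j`. For `c` a `2`-cocycle this is the twist map `φ`. -/
def tensorScaling (c : ι → κ → Rˣ) : M ⊗[R] N ≃ₗ[R] M ⊗[R] N :=
  tensorDecompose ℳ 𝒩 ≪≫ₗ
    DirectSum.congrLinearEquiv (fun p => LinearEquiv.smulOfUnit (c p.1 p.2)) ≪≫ₗ
    (tensorDecompose ℳ 𝒩).symm

variable {ℳ 𝒩}

theorem tensorDecompose_tmul_coe {i : ι} {j : κ} (m : ℳ i) (n : 𝒩 j) :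
    tensorDecompose ℳ 𝒩 ((m : M) ⊗ₜ (n : N)) =
      DirectSum.lof R (ι × κ) (fun p => ℳ p.1 ⊗[R] 𝒩 p.2) (i, j) (m ⊗ₜ n) := by
  simp only [tensorDecompose, LinearEquiv.trans_apply, TensorProduct.congr_tmul,
    DirectSum.decomposeLinearEquiv_apply_coe, TensorProduct.directSum_lof_tmul_lof]

theorem tensorScaling_tmul (c : ι → κ → Rˣ) {i : ι} {j : κ} {m : M} {n : N}
    (hm : m ∈ ℳ i) (hn : n ∈ 𝒩 j) :
    tensorScaling ℳ 𝒩 c (m ⊗ₜ n) = c i j • (m ⊗ₜ[R] n) := by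
  lift m to ℳ i using hm
  lift n to 𝒩 j using hn
  simp only [tensorScaling, LinearEquiv.trans_apply, tensorDecompose_tmul_coe,
    LinearEquiv.symm_apply_eq]
  rw [DirectSum.coe_congrLinearEquiv, DirectSum.lmap_lof, Units.smul_def, map_smul,
    tensorDecompose_tmul_coe, ← map_smul]
  rfl

theorem tensorScaling_comp_map (c : ι → κ → Rˣ) {f : M →ₗ[R] M} {g : N →ₗ[R] N}
    (hf : ∀ i, ∀ m ∈ ℳ i, f m ∈ ℳ i) (hg : ∀ j, ∀ n ∈ 𝒩 j, g n ∈ 𝒩 j) :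
    (tensorScaling ℳ 𝒩 c).toLinearMap ∘ₗ TensorProduct.map f g =
      TensorProduct.map f g ∘ₗ (tensorScaling ℳ 𝒩 c).toLinearMap := by
  refine linearMap_ext_of_homogeneous_tmul ℳ 𝒩 fun i j m hm n hn => ?_
  simp [tensorScaling_tmul c hm hn, tensorScaling_tmul c (hf i m hm) (hg j n hn),
    LinearMap.map_smul_of_tower]

theorem map_tensorScaling_tensorDegree [Add ι] {𝒩 : ι → Submodule R N}
    [DirectSum.Decomposition 𝒩] (c : ι → ι → Rˣ) (g : ι) :
    (tensorDegree ℳ 𝒩 g).map (tensorScaling ℳ 𝒩 c).toLinearMap = tensorDegree ℳ 𝒩 g := by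
  rw [tensorDegree, Submodule.map_span]
  nth_rw 2 [← Set.image_id {x | _}]
  refine span_image_eq_of_eq_unit_smul ?_
  rintro _ ⟨i, j, m, hm, n, hn, -, rfl⟩
  exact ⟨c i j, tensorScaling_tmul c hm hn⟩

theorem tensorScaling_mem_iSup_tensorDegree_iff [Add ι] {𝒩 : ι → Submodule R N}
    [DirectSum.Decomposition 𝒩] (c : ι → ι → Rˣ) (S : Set ι) {x : M ⊗[R] N} :
    tensorScaling ℳ 𝒩 c x ∈ ⨆ g ∈ S, tensorDegree ℳ 𝒩 g ↔ x ∈ ⨆ g ∈ S, tensorDegree ℳ 𝒩 g := by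
  have hmap : (⨆ g ∈ S, tensorDegree ℳ 𝒩 g).map (tensorScaling ℳ 𝒩 c).toLinearMap =
      ⨆ g ∈ S, tensorDegree ℳ 𝒩 g := by
    simp only [Submodule.map_iSup, map_tensorScaling_tensorDegree]
  nth_rw 1 [← hmap]
  exact (tensorScaling ℳ 𝒩 c).injective.mem_set_image

end TensorScaling

/-- Multiplicative `2`-cocycles on `G` with trivial action on the values: the additively written
analogue of `groupCohomology.IsMulCocycle₂`. -/
def IsTwoCocycle {G M : Type*} [Add G] [Mul M] (σ : G → G → M) : Prop :=
  ∀ p q r, σ (p + q) r * σ p q = σ p (q + r) * σ q r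

-- Exchanging the two middle terms regroups `(p + u) + (p' + u')` as `(p + p') + (u + u')`, which is
-- why the braiding `σ p' u / σ u p'` accounts exactly for the difference of the cocycle factors.
theorem IsTwoCocycle.braiding_mul {G M : Type*} [AddCommSemigroup G] [CommGroup M] {σ : G → G → M}
    (hσ : IsTwoCocycle σ) (p p' u u' : G) :
    σ p' u / σ u p' * (σ p u * σ p' u' * σ (p + u) (p' + u'))
      = σ (p + p') (u + u') * (σ p p' * σ u u') := by
  rw [div_mul_eq_mul_div, div_eq_iff_eq_mul]
  calc σ p' u * (σ p u * σ p' u' * σ (p + u) (p' + u'))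
      = σ p' u * σ p' u' * (σ (p + u) (p' + u') * σ p u) := by ac_rfl
    _ = σ p (p' + u + u') * σ p' u * (σ u (p' + u') * σ p' u') := by rw [hσ p u]; ac_rfl
    _ = σ p (p' + u + u') * σ u p' * (σ (p' + u) u' * σ p' u) := by
      rw [← hσ u p', add_comm u p']; ac_rfl
    _ = σ u p' * σ u u' * (σ p (p' + (u + u')) * σ p' (u + u')) := by
      rw [hσ p' u, add_assoc]; ac_rfl
    _ = σ (p + p') (u + u') * (σ p p' * σ u u') * σ u p' := by rw [← hσ p p']; ac_rfl

section CocycleTwist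

variable {R G A : Type*} [CommSemiring R] [Semiring A] [Algebra R A]
  (𝒜 : G → Submodule R A) (σ : G → G → Rˣ) (star : A →ₗ[R] A →ₗ[R] A)
  (braided : A ⊗[R] A →ₗ[R] A ⊗[R] A →ₗ[R] A ⊗[R] A)

/-- `star` is the product of the cocycle twist of `A` by `σ`; a predicate on a bilinear map,
which does not carry a ring structure. -/
def IsTwistedProduct : Prop :=
  ∀ p q, ∀ a ∈ 𝒜 p, ∀ b ∈ 𝒜 q, star a b = σ p q • (a * b)

/-- `braided` is the product of the braided tensor square of the twisted algebra `(A, star)`, the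
braiding of degrees `p'` and `u` being multiplication by `σ p' u / σ u p'`. -/
def IsBraidedProduct : Prop :=
  ∀ p p' u u', ∀ a ∈ 𝒜 p, ∀ a' ∈ 𝒜 p', ∀ b ∈ 𝒜 u, ∀ b' ∈ 𝒜 u',
    braided (a ⊗ₜ a') (b ⊗ₜ b') = (σ p' u / σ u p') • (star a b ⊗ₜ[R] star a' b')

variable {𝒜 σ star braided} [DecidableEq G]

section Decomposition

variable [DirectSum.Decomposition 𝒜]

theorem IsTwistedProduct.lift_eq (hstar : IsTwistedProduct 𝒜 σ star) :
    TensorProduct.lift star = LinearMap.mul' R A ∘ₗ (tensorScaling 𝒜 𝒜 σ).toLinearMap :=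
  linearMap_ext_of_homogeneous_tmul 𝒜 𝒜 fun p q a ha b hb => by
    simp [hstar p q a ha b hb, tensorScaling_tmul σ ha hb, LinearMap.map_smul_of_tower]

theorem IsTwistedProduct.lift_comp_map (hstar : IsTwistedProduct 𝒜 σ star) {E : A →ₗ[R] A}
    (hE : ∀ p, ∀ a ∈ 𝒜 p, E a ∈ 𝒜 p) :
    TensorProduct.lift star ∘ₗ TensorProduct.map LinearMap.id E =
      (LinearMap.mul' R A ∘ₗ TensorProduct.map LinearMap.id E) ∘ₗ
        (tensorScaling 𝒜 𝒜 σ).toLinearMap := by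
  rw [hstar.lift_eq, LinearMap.comp_assoc, tensorScaling_comp_map σ (fun _ _ ha => ha) hE,
    LinearMap.comp_assoc]

theorem IsTwistedProduct.map_tensorScaling_ker_lift (hstar : IsTwistedProduct 𝒜 σ star) :
    (LinearMap.ker (TensorProduct.lift star)).map (tensorScaling 𝒜 𝒜 σ).toLinearMap =
      LinearMap.ker (LinearMap.mul' R A) := by
  rw [hstar.lift_eq, LinearMap.ker_comp]
  exact Submodule.map_comap_eq_of_surjective (tensorScaling 𝒜 𝒜 σ).surjective _

end Decomposition

section GradedAlgebra

variable [AddCommMonoid G] [GradedAlgebra 𝒜]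

theorem IsBraidedProduct.tensorScaling_tmul_tmul (hbraided : IsBraidedProduct 𝒜 σ star braided)
    (hstar : IsTwistedProduct 𝒜 σ star) (hσ : IsTwoCocycle σ) {p p' u u' : G} {a a' b b' : A}
    (ha : a ∈ 𝒜 p) (ha' : a' ∈ 𝒜 p') (hb : b ∈ 𝒜 u) (hb' : b' ∈ 𝒜 u') :
    tensorScaling 𝒜 𝒜 σ (braided (a ⊗ₜ a') (b ⊗ₜ b')) =
      σ (p + p') (u + u') •
        (tensorScaling 𝒜 𝒜 σ (a ⊗ₜ a') * tensorScaling 𝒜 𝒜 σ (b ⊗ₜ b')) := by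
  have hab : a * b ∈ 𝒜 (p + u) := SetLike.mul_mem_graded ha hb
  have hab' : a' * b' ∈ 𝒜 (p' + u') := SetLike.mul_mem_graded ha' hb'
  calc tensorScaling 𝒜 𝒜 σ (braided (a ⊗ₜ a') (b ⊗ₜ b'))
      = (σ p' u / σ u p' * (σ p u * σ p' u' * σ (p + u) (p' + u'))) •
          ((a * b) ⊗ₜ[R] (a' * b')) := by
        rw [hbraided p p' u u' a ha a' ha' b hb b' hb', hstar p u a ha b hb,
          hstar p' u' a' ha' b' hb']
        simp only [TensorProduct.smul_tmul_smul, Units.smul_def, map_smul,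
          tensorScaling_tmul σ hab hab', smul_smul, Units.val_mul, mul_assoc]
    _ = (σ (p + p') (u + u') * (σ p p' * σ u u')) • ((a * b) ⊗ₜ[R] (a' * b')) := by
        rw [hσ.braiding_mul]
    _ = σ (p + p') (u + u') •
          (tensorScaling 𝒜 𝒜 σ (a ⊗ₜ a') * tensorScaling 𝒜 𝒜 σ (b ⊗ₜ b')) := by
        simp only [tensorScaling_tmul σ ha ha', tensorScaling_tmul σ hb hb',
          smul_mul_smul_comm, Algebra.TensorProduct.tmul_mul_tmul, mul_smul]

theorem IsBraidedProduct.tensorScaling_braided (hbraided : IsBraidedProduct 𝒜 σ star braided)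
    (hstar : IsTwistedProduct 𝒜 σ star) (hσ : IsTwoCocycle σ) {g h : G} {x y : A ⊗[R] A}
    (hx : x ∈ tensorDegree 𝒜 𝒜 g) (hy : y ∈ tensorDegree 𝒜 𝒜 h) :
    tensorScaling 𝒜 𝒜 σ (braided x y) =
      σ g h • (tensorScaling 𝒜 𝒜 σ x * tensorScaling 𝒜 𝒜 σ y) := by
  induction hx, hy using Submodule.span_induction₂ with
  | mem_mem x y hx hy =>
    obtain ⟨p, p', a, ha, a', ha', rfl, rfl⟩ := hx
    obtain ⟨u, u', b, hb, b', hb', rfl, rfl⟩ := hy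
    exact hbraided.tensorScaling_tmul_tmul hstar hσ ha ha' hb hb'
  | zero_left => simp
  | zero_right => simp
  | add_left _ _ _ _ _ _ h₁ h₂ => simp [h₁, h₂, add_mul]
  | add_right _ _ _ _ _ _ h₁ h₂ => simp [h₁, h₂, mul_add]
  | smul_left r _ _ _ _ h => simp [h, smul_comm r]
  | smul_right r _ _ _ _ h => simp [h, smul_comm r]

end GradedAlgebra

end CocycleTwist

section HomogeneousKernel

variable {R G A : Type*} [CommRing R] [AddMonoid G] [DecidableEq G] [Ring A] [Algebra R A]
  {𝒜 : G → Submodule R A} [GradedAlgebra 𝒜]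

variable (𝒜) in
theorem iSup_ker_mul'_inf_tensorDegree :
    ⨆ g, LinearMap.ker (LinearMap.mul' R A) ⊓ tensorDegree 𝒜 𝒜 g =
      LinearMap.ker (LinearMap.mul' R A) := by
  set K := LinearMap.ker (LinearMap.mul' R A)
  refine le_antisymm (iSup_le fun g => inf_le_left) fun x hx => ?_
  let π : A ⊗[R] A →ₗ[R] A ⊗[R] A :=
    LinearMap.id - (TensorProduct.mk R A A).flip 1 ∘ₗ LinearMap.mul' R A
  have hπ : (⨆ g, K ⊓ tensorDegree 𝒜 𝒜 g).mkQ ∘ₗ π = 0 :=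
    linearMap_ext_of_homogeneous_tmul 𝒜 𝒜 fun p q a ha b hb => by
      have hπ_tmul : π (a ⊗ₜ b) = a ⊗ₜ b - (a * b) ⊗ₜ 1 := by simp [π]
      have hab : a * b ∈ 𝒜 (p + q) := SetLike.mul_mem_graded ha hb
      have hdeg : (a * b) ⊗ₜ[R] (1 : A) ∈ tensorDegree 𝒜 𝒜 (p + q) := by
        simpa using tmul_mem_tensorDegree hab (SetLike.one_mem_graded 𝒜)
      have hmem : a ⊗ₜ[R] b - (a * b) ⊗ₜ[R] 1 ∈ K ⊓ tensorDegree 𝒜 𝒜 (p + q) :=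
        ⟨by simp [K], Submodule.sub_mem _ (tmul_mem_tensorDegree ha hb) hdeg⟩
      rw [LinearMap.comp_apply, hπ_tmul, LinearMap.zero_apply, Submodule.mkQ_apply,
        Submodule.Quotient.mk_eq_zero]
      exact le_iSup (fun g => K ⊓ tensorDegree 𝒜 𝒜 g) (p + q) hmem
  have hx' : π x = x := by simp [π, LinearMap.mem_ker.1 hx]
  simpa [hx'] using LinearMap.congr_fun hπ x

theorem IsTwistedProduct.iSup_ker_lift_inf_tensorDegree {σ : G → G → Rˣ}
    {star : A →ₗ[R] A →ₗ[R] A} (hstar : IsTwistedProduct 𝒜 σ star) :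
    ⨆ g, LinearMap.ker (TensorProduct.lift star) ⊓ tensorDegree 𝒜 𝒜 g =
      LinearMap.ker (TensorProduct.lift star) := by
  refine Submodule.map_injective_of_injective (tensorScaling 𝒜 𝒜 σ).injective ?_
  simp only [Submodule.map_iSup, Submodule.map_inf _ (tensorScaling 𝒜 𝒜 σ).injective,
    hstar.map_tensorScaling_ker_lift, map_tensorScaling_tensorDegree,
    iSup_ker_mul'_inf_tensorDegree]

end HomogeneousKernel

/-- The connection forms in `(A ⊗ A) ⧸ N`, where `A` has product `μ`: classes of `x ∈ ker μ` with
degrees in `S` (for the Hopf fibration, the bidegrees of total degree `0`) whose vertical part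
`μ ((id ⊗ E) x)` is `1`. -/
def connections {R G A : Type*} [CommRing R] [Add G] [Ring A] [Algebra R A]
    (𝒜 : G → Submodule R A) (S : Set G) (μ : A ⊗[R] A →ₗ[R] A) (E : A →ₗ[R] A)
    (N : Submodule R (A ⊗[R] A)) : Set ((A ⊗[R] A) ⧸ N) :=
  {w | ∃ x ∈ LinearMap.ker μ, x ∈ ⨆ g ∈ S, tensorDegree 𝒜 𝒜 g ∧
    (μ ∘ₗ TensorProduct.map LinearMap.id E) x = 1 ∧ w = N.mkQ x}

section Connections

variable {R G A : Type*} [CommRing R] [AddCommMonoid G] [DecidableEq G] [Ring A] [Algebra R A]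
  {𝒜 : G → Submodule R A} [GradedAlgebra 𝒜] {σ : G → G → Rˣ} {star : A →ₗ[R] A →ₗ[R] A}
  {braided : A ⊗[R] A →ₗ[R] A ⊗[R] A →ₗ[R] A ⊗[R] A}

theorem IsBraidedProduct.map_tensorScaling_span_ker
    (hbraided : IsBraidedProduct 𝒜 σ star braided) (hstar : IsTwistedProduct 𝒜 σ star)
    (hσ : IsTwoCocycle σ) :
    (Submodule.span R {z | ∃ x ∈ LinearMap.ker (TensorProduct.lift star),
        ∃ y ∈ LinearMap.ker (TensorProduct.lift star), z = braided x y}).map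
          (tensorScaling 𝒜 𝒜 σ).toLinearMap =
      LinearMap.ker (LinearMap.mul' R A) * LinearMap.ker (LinearMap.mul' R A) := by
  set φ := (tensorScaling 𝒜 𝒜 σ).toLinearMap
  set K := LinearMap.ker (TensorProduct.lift star)
  have hK : K = ⨆ g, K ⊓ tensorDegree 𝒜 𝒜 g := hstar.iSup_ker_lift_inf_tensorDegree.symm
  calc (Submodule.span R {z | ∃ x ∈ K, ∃ y ∈ K, z = braided x y}).map φ
      = (Submodule.map₂ braided K K).map φ := by
        simp only [Submodule.map₂_eq_span_image2, Set.image2, SetLike.mem_coe, eq_comm]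
    _ = Submodule.map₂ (braided.compr₂ φ) K K := Submodule.map_map₂ ..
    _ = Submodule.map₂ ((LinearMap.mul R (A ⊗[R] A)).compl₁₂ φ φ) K K := by
        rw [hK]
        simp only [Submodule.map₂_iSup_left, Submodule.map₂_iSup_right]
        refine iSup_congr fun g => iSup_congr fun h => map₂_eq_of_eq_unit_smul (σ h g) ?_
        exact fun x hx y hy => hbraided.tensorScaling_braided hstar hσ hx.2 hy.2
    _ = K.map φ * K.map φ := by rw [Submodule.mul_eq_map₂, Submodule.map₂_map_map]
    _ = LinearMap.ker (LinearMap.mul' R A) * LinearMap.ker (LinearMap.mul' R A) := by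
        rw [hstar.map_tensorScaling_ker_lift]

theorem phase_map_bijection_of_connections_general (hσ : IsTwoCocycle σ)
    (hstar : IsTwistedProduct 𝒜 σ star) (hbraided : IsBraidedProduct 𝒜 σ star braided)
    {E : A →ₗ[R] A} (hE : ∀ p, ∀ a ∈ 𝒜 p, E a ∈ 𝒜 p) (S : Set G)
    {φ : A ⊗[R] A →ₗ[R] A ⊗[R] A}
    (hφ : ∀ p q, ∀ a ∈ 𝒜 p, ∀ b ∈ 𝒜 q, φ (a ⊗ₜ b) = σ p q • (a ⊗ₜ[R] b))
    {N Nσ : Submodule R (A ⊗[R] A)}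
    (hN : N = LinearMap.ker (LinearMap.mul' R A) * LinearMap.ker (LinearMap.mul' R A))
    (hNσ : Nσ = Submodule.span R {z | ∃ x ∈ LinearMap.ker (TensorProduct.lift star),
      ∃ y ∈ LinearMap.ker (TensorProduct.lift star), z = braided x y})
    {φbar : ((A ⊗[R] A) ⧸ Nσ) →ₗ[R] ((A ⊗[R] A) ⧸ N)}
    (hφbar : ∀ x, φbar (Nσ.mkQ x) = N.mkQ (φ x)) :
    Set.BijOn φbar (connections 𝒜 S (TensorProduct.lift star) E Nσ)
      (connections 𝒜 S (LinearMap.mul' R A) E N) := by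
  have hmap : Nσ.map (tensorScaling 𝒜 𝒜 σ).toLinearMap = N := by
    rw [hN, hNσ, hbraided.map_tensorScaling_span_ker hstar hσ]
  obtain rfl : φ = (tensorScaling 𝒜 𝒜 σ).toLinearMap :=
    linearMap_ext_of_homogeneous_tmul 𝒜 𝒜 fun p q a ha b hb =>
      (hφ p q a ha b hb).trans (tensorScaling_tmul σ ha hb).symm
  obtain rfl : φbar = (Submodule.Quotient.equiv Nσ N (tensorScaling 𝒜 𝒜 σ) hmap).toLinearMap :=
    Submodule.linearMap_qext _ (LinearMap.ext hφbar)
  rw [connections, hstar.lift_comp_map hE, hstar.lift_eq]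
  refine ⟨?_, (Submodule.Quotient.equiv Nσ N _ hmap).injective.injOn, ?_⟩
  · rintro _ ⟨x, hker, hdeg, hvert, rfl⟩
    exact ⟨_, hker, (tensorScaling_mem_iSup_tensorDegree_iff σ S).2 hdeg, hvert, hφbar x⟩
  · rintro _ ⟨y, hker, hdeg, hvert, rfl⟩
    obtain ⟨x, rfl⟩ := (tensorScaling 𝒜 𝒜 σ).surjective y
    exact ⟨_, ⟨x, hker, (tensorScaling_mem_iSup_tensorDegree_iff σ S).1 hdeg, hvert, rfl⟩,
      hφbar x⟩

end Connections

/-- The phase `e^{πiθ(m₁m₂' − m₂m₁')}` as a unit-valued function, as the cocycle twist requires. -/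
def phaseCocycle (θ : ℝ) (p q : ℤ × ℤ) : ℂˣ :=
  Units.mk0 (phase θ p q) (Complex.exp_ne_zero _)

theorem isTwoCocycle_phaseCocycle (θ : ℝ) : IsTwoCocycle (phaseCocycle θ) := by
  intro p q r
  ext
  simp only [phaseCocycle, phase, Units.val_mul, Units.val_mk0, ← Complex.exp_add, Prod.fst_add,
    Prod.snd_add]
  push_cast
  ring_nf

theorem rphase_eq_phaseCocycle_div (θ : ℝ) (u w : ℤ × ℤ) :
    rphase θ u w = ↑(phaseCocycle θ w u / phaseCocycle θ u w) := by
  simp only [phaseCocycle, phase, rphase, Units.val_div_eq_div_val, Units.val_mk0,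
    ← Complex.exp_sub]
  push_cast
  ring_nf

/-- the linear bijection `φ̄_θ : Ω¹(A_θ) → Ω¹(A)` restricts to a bijection
from the set `Con(A_θ,δ)` of connections on the deformed Hopf fibration onto the set
`Con(A,δ)` of connections on the classical Hopf fibration. -/
theorem phase_map_bijection_of_connections
    (A : Type) [CommRing A] [Algebra ℂ A]
    (𝒜 : ℤ × ℤ → Submodule ℂ A) [GradedAlgebra 𝒜]
    (z1 z2 z1s z2s : A)
    (hz1 : z1 ∈ 𝒜 (1, 0)) (hz2 : z2 ∈ 𝒜 (0, 1))
    (hz1s : z1s ∈ 𝒜 (-1, 0)) (hz2s : z2s ∈ 𝒜 (0, -1))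
    (hrel : z1s * z1 + z2s * z2 = 1)
    (huniv : ∀ (C : Type) [CommRing C] [Algebra ℂ C] (w1 w2 w1s w2s : C),
      w1s * w1 + w2s * w2 = 1 →
      ∃! f : A →ₐ[ℂ] C, f z1 = w1 ∧ f z2 = w2 ∧ f z1s = w1s ∧ f z2s = w2s)
    (θ : ℝ)
    (stp : A →ₗ[ℂ] A →ₗ[ℂ] A)
    (hstp : ∀ (p q : ℤ × ℤ), ∀ a ∈ 𝒜 p, ∀ a' ∈ 𝒜 q, stp a a' = phase θ p q • (a * a'))
    (bmul : A ⊗[ℂ] A →ₗ[ℂ] A ⊗[ℂ] A →ₗ[ℂ] A ⊗[ℂ] A)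
    (hbmul : ∀ (p p' u u' : ℤ × ℤ), ∀ a ∈ 𝒜 p, ∀ a' ∈ 𝒜 p', ∀ c ∈ 𝒜 u, ∀ c' ∈ 𝒜 u',
      bmul (a ⊗ₜ[ℂ] a') (c ⊗ₜ[ℂ] c')
        = rphase θ u p' • ((stp a c) ⊗ₜ[ℂ] (stp a' c')))
    (Euler : A →ₗ[ℂ] A)
    (hEuler : ∀ (p : ℤ × ℤ), ∀ a ∈ 𝒜 p, Euler a = ((p.1 + p.2 : ℤ) : ℂ) • a)
    -- the cocycle phase map `φ_θ` on `A ⊗ A`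
    (φ : A ⊗[ℂ] A →ₗ[ℂ] A ⊗[ℂ] A)
    (hφ : ∀ (p q : ℤ × ℤ), ∀ a ∈ 𝒜 p, ∀ a' ∈ 𝒜 q,
      φ (a ⊗ₜ[ℂ] a') = phase θ p q • (a ⊗ₜ[ℂ] a')) :
    ∀ (K K2 Kθ K2θ : Submodule ℂ (A ⊗[ℂ] A))
      (vrep vθrep : A ⊗[ℂ] A →ₗ[ℂ] A),
      K = LinearMap.ker (LinearMap.mul' ℂ A) →
      K2 = K * K →
      Kθ = LinearMap.ker (TensorProduct.lift stp) →
      K2θ = Submodule.span ℂ {y : A ⊗[ℂ] A | ∃ x ∈ Kθ, ∃ x' ∈ Kθ, y = bmul x x'} →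
      vrep = (LinearMap.mul' ℂ A).comp (TensorProduct.map LinearMap.id Euler) →
      vθrep = (TensorProduct.lift stp).comp (TensorProduct.map LinearMap.id Euler) →
      -- for the induced map `φ̄_θ` on Kähler `1`-forms…
      ∀ (φbar : ((A ⊗[ℂ] A) ⧸ K2θ) →ₗ[ℂ] ((A ⊗[ℂ] A) ⧸ K2)),
        (∀ x : A ⊗[ℂ] A, φbar (K2θ.mkQ x) = K2.mkQ (φ x)) →
        -- …`φ̄_θ` maps `Con(A_θ,δ)` bijectively onto `Con(A,δ)`
        Set.BijOn φbar
          {w : (A ⊗[ℂ] A) ⧸ K2θ | ∃ x : A ⊗[ℂ] A,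
            x ∈ Kθ ∧ x ∈ tensorTotalDeg 𝒜 0 ∧ vθrep x = 1 ∧ w = K2θ.mkQ x}
          {w : (A ⊗[ℂ] A) ⧸ K2 | ∃ x : A ⊗[ℂ] A,
            x ∈ K ∧ x ∈ tensorTotalDeg 𝒜 0 ∧ vrep x = 1 ∧ w = K2.mkQ x} := by
  rintro _ _ _ _ _ _ rfl rfl rfl rfl rfl rfl φbar hφbar
  have hbraided : IsBraidedProduct 𝒜 (phaseCocycle θ) stp bmul :=
    fun p p' u u' a ha a' ha' c hc c' hc' => (hbmul p p' u u' a ha a' ha' c hc c' hc').trans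
      (by rw [rphase_eq_phaseCocycle_div, Units.smul_def])
  have hEuler_mem : ∀ p, ∀ a ∈ 𝒜 p, Euler a ∈ 𝒜 p :=
    fun p a ha => hEuler p a ha ▸ (𝒜 p).smul_mem _ ha
  exact phase_map_bijection_of_connections_general (isTwoCocycle_phaseCocycle θ) hstp hbraided
    hEuler_mem {p | p.1 + p.2 = 0} hφ rfl rfl hφbar
end
end

section
/- Suppose θ ∈ ℝ is irrational and the ℤ-graded vector space V has Vⁿ ≠ 0 for some n ≠ 0 (i.e., the O(U(1))-coaction on V is non-trivial). Then the left B-module isomorphism L_V : E_A(V) → E_{A_θ}(V) does not intertwine the actions of infinitesimal gauge transformations: there exist b ∈ B and ξ ∈ E_A(V) such that L_V(ξ ◁ (b⊗X)) ≠ L_V(ξ) ◁_θ (b⊗X). -/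
/-!
Let `a` have degree `(m + n, -m)`, let `v ∈ Vⁿ`, and let `b ∈ B` have degree `(k, -k)`. Applied
to `a ⊗ v`, both composites are multiples of `n (a b) ⊗ v`: the factor is `e^{πiθ(m + k)n}` if the
gauge transformation acts first, since `a b` has degree `(m + k + n, -(m + k))`, and
`e^{πiθmn} e^{-πiθkn}` if `L_V` does, the second phase coming from the star product. They differ as
soon as `θkn ∉ ℤ`. In `O(S³)` one takes `b = z₁ z₂*`, so that `k = 1`, and for `a` a power of `z₁`
or of `z₁*`. All these `a b` are nonzero because `z₁ z₁* b` is not nilpotent: a character of `O(S³)`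
that vanishes at no generator detects its powers.
-/

set_option synthInstance.maxHeartbeats 1000000
set_option maxHeartbeats 1000000

open scoped TensorProduct
noncomputable section

/-- The phase factor `e^{πiθmn}`. -/
def lphase (θ : ℝ) (m n : ℤ) : ℂ :=
  Complex.exp (Complex.I * ((Real.pi * θ : ℝ) : ℂ) * ((m * n : ℤ) : ℂ))

/-- The vector space underlying the associated module `E_A(V) = ⊕ₙ A⁽ⁿ⁾ ⊗ Vⁿ`. -/
def assocModule {A : Type} [CommRing A] [Algebra ℂ A]
    (𝒜 : ℤ × ℤ → Submodule ℂ A)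
    {V : Type} [AddCommGroup V] [Module ℂ V] (𝒱 : ℤ → Submodule ℂ V) :
    Submodule ℂ (A ⊗[ℂ] V) :=
  Submodule.span ℂ
    {x : A ⊗[ℂ] V | ∃ (m n : ℤ) (a : A) (v : V),
      a ∈ 𝒜 (m + n, -m) ∧ v ∈ 𝒱 n ∧ x = a ⊗ₜ[ℂ] v}

theorem lphase_mul_phase (θ : ℝ) (m n k : ℤ) :
    lphase θ m n * phase θ (m + n, -m) (k, -k) = lphase θ (m - k) n := by
  simp only [lphase, phase, ← Complex.exp_add]
  congr 1
  push_cast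
  ring

theorem lphase_add_eq_lphase_sub_iff {θ : ℝ} {m k n : ℤ} :
    lphase θ (m + k) n = lphase θ (m - k) n ↔ ∃ j : ℤ, θ * (k * n) = j := by
  simp only [lphase, Complex.exp_eq_exp_iff_exists_int]
  refine exists_congr fun j => ?_
  rw [← Complex.ofReal_inj,
    ← mul_right_inj' Complex.two_pi_I_ne_zero (b := ((θ * (k * n) : ℝ) : ℂ))]
  push_cast
  constructor <;> intro h <;> linear_combination h

theorem tmul_ne_zero {R M P : Type*} [CommSemiring R] [IsCancelMulZero R] [AddCommMonoid M]
    [Module R M] [Module.Projective R M] [AddCommMonoid P] [Module R P] [Module.IsTorsionFree R P]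
    {x : M} {y : P} (hx : x ≠ 0) (hy : y ≠ 0) : x ⊗ₜ[R] y ≠ 0 := by
  obtain ⟨f, hf⟩ : ∃ f : Module.Dual R M, f x ≠ 0 := by
    simpa using mt (Module.forall_dual_apply_eq_zero_iff R x).1 hx
  intro h
  have hfxy : f x • y = 0 := by
    simpa using congrArg (fun t => TensorProduct.lid R P (f.rTensor P t)) h
  exact smul_ne_zero hf hy hfxy

theorem exists_mem_zsmul_mul_ne_zero {ι R σ : Type*} [AddGroup ι] [CommSemiring R] [SetLike σ R]
    (𝒜 : ι → σ) [SetLike.GradedMonoid 𝒜] {g : ι} {x y b : R} (hx : x ∈ 𝒜 g) (hy : y ∈ 𝒜 (-g))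
    (hxyb : ¬ IsNilpotent (x * y * b)) (n : ℤ) : ∃ a ∈ 𝒜 (n • g), a * b ≠ 0 := by
  have hpow (k : ℕ) : (x * y * b) ^ (k + 1) ≠ 0 := fun h => hxyb ⟨k + 1, h⟩
  obtain ⟨k, rfl | rfl⟩ := n.eq_nat_or_neg
  · refine ⟨x ^ k, by simpa using SetLike.pow_mem_graded k hx, fun h => hpow k ?_⟩
    calc (x * y * b) ^ (k + 1) = x ^ k * b * (x * y ^ (k + 1) * b ^ k) := by ring
      _ = 0 := by rw [h, zero_mul]
  · refine ⟨y ^ k, by simpa using SetLike.pow_mem_graded k hy, fun h => hpow k ?_⟩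
    calc (x * y * b) ^ (k + 1) = y ^ k * b * (x ^ (k + 1) * y * b ^ k) := by ring
      _ = 0 := by rw [h, zero_mul]

theorem mem_totalDeg {A : Type} [AddCommMonoid A] [Module ℂ A] {𝒜 : ℤ × ℤ → Submodule ℂ A}
    {p : ℤ × ℤ} {n : ℤ} {a : A} (hp : p.1 + p.2 = n) (ha : a ∈ 𝒜 p) : a ∈ totalDeg 𝒜 n :=
  Submodule.mem_iSup_of_mem p (Submodule.mem_iSup_of_mem hp ha)

section GaugeAction

variable {A : Type} [CommRing A] [Algebra ℂ A] {𝒜 : ℤ × ℤ → Submodule ℂ A}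
  {V : Type} [AddCommGroup V] [Module ℂ V] {𝒱 : ℤ → Submodule ℂ V}
  {θ : ℝ} {stp : A →ₗ[ℂ] A →ₗ[ℂ] A} {N : V →ₗ[ℂ] V} {L : A ⊗[ℂ] V →ₗ[ℂ] A ⊗[ℂ] V}
  {m n k : ℤ} {a b : A} {v : V}

theorem tmul_mem_assocModule (ha : a ∈ 𝒜 (m + n, -m)) (hv : v ∈ 𝒱 n) :
    a ⊗ₜ[ℂ] v ∈ assocModule 𝒜 𝒱 :=
  Submodule.subset_span ⟨m, n, a, v, ha, hv, rfl⟩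

theorem twist_gauge_tmul [SetLike.GradedMonoid 𝒜]
    (hN : ∀ (n : ℤ), ∀ v ∈ 𝒱 n, N v = (n : ℂ) • v)
    (hL : ∀ (m n : ℤ) (a : A) (v : V), a ∈ 𝒜 (m + n, -m) → v ∈ 𝒱 n →
      L (a ⊗ₜ[ℂ] v) = lphase θ m n • (a ⊗ₜ[ℂ] v))
    (ha : a ∈ 𝒜 (m + n, -m)) (hb : b ∈ 𝒜 (k, -k)) (hv : v ∈ 𝒱 n) :
    L (TensorProduct.map (LinearMap.mulRight ℂ b) N (a ⊗ₜ[ℂ] v))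
      = lphase θ (m + k) n • (n : ℂ) • ((a * b) ⊗ₜ[ℂ] v) := by
  have hab : a * b ∈ 𝒜 (m + k + n, -(m + k)) := by
    convert SetLike.mul_mem_graded ha hb using 2
    ext <;> simp only [Prod.fst_add, Prod.snd_add] <;> ring
  rw [TensorProduct.map_tmul, LinearMap.mulRight_apply, hN n v hv, TensorProduct.tmul_smul,
    map_smul, hL _ _ _ _ hab hv, smul_comm]

theorem starGauge_twist_tmul
    (hstp : ∀ (p q : ℤ × ℤ), ∀ a ∈ 𝒜 p, ∀ a' ∈ 𝒜 q, stp a a' = phase θ p q • (a * a'))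
    (hN : ∀ (n : ℤ), ∀ v ∈ 𝒱 n, N v = (n : ℂ) • v)
    (hL : ∀ (m n : ℤ) (a : A) (v : V), a ∈ 𝒜 (m + n, -m) → v ∈ 𝒱 n →
      L (a ⊗ₜ[ℂ] v) = lphase θ m n • (a ⊗ₜ[ℂ] v))
    (ha : a ∈ 𝒜 (m + n, -m)) (hb : b ∈ 𝒜 (k, -k)) (hv : v ∈ 𝒱 n) :
    TensorProduct.map (stp.flip b) N (L (a ⊗ₜ[ℂ] v))
      = lphase θ (m - k) n • (n : ℂ) • ((a * b) ⊗ₜ[ℂ] v) := by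
  rw [hL m n a v ha hv, map_smul, TensorProduct.map_tmul, LinearMap.flip_apply,
    hstp _ _ a ha b hb, hN n v hv, TensorProduct.tmul_smul, ← TensorProduct.smul_tmul',
    smul_comm (n : ℂ), smul_smul, lphase_mul_phase]

theorem twist_gauge_tmul_ne_starGauge_twist_tmul [SetLike.GradedMonoid 𝒜]
    (hstp : ∀ (p q : ℤ × ℤ), ∀ a ∈ 𝒜 p, ∀ a' ∈ 𝒜 q, stp a a' = phase θ p q • (a * a'))
    (hN : ∀ (n : ℤ), ∀ v ∈ 𝒱 n, N v = (n : ℂ) • v)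
    (hL : ∀ (m n : ℤ) (a : A) (v : V), a ∈ 𝒜 (m + n, -m) → v ∈ 𝒱 n →
      L (a ⊗ₜ[ℂ] v) = lphase θ m n • (a ⊗ₜ[ℂ] v))
    (ha : a ∈ 𝒜 (m + n, -m)) (hb : b ∈ 𝒜 (k, -k)) (hv : v ∈ 𝒱 n)
    (hab : a * b ≠ 0) (hv0 : v ≠ 0) (hθ : ∀ j : ℤ, θ * (k * n) ≠ j) :
    L (TensorProduct.map (LinearMap.mulRight ℂ b) N (a ⊗ₜ[ℂ] v))
      ≠ TensorProduct.map (stp.flip b) N (L (a ⊗ₜ[ℂ] v)) := by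
  have hn : (n : ℂ) ≠ 0 := by
    rw [Int.cast_ne_zero]
    rintro rfl
    exact hθ 0 (by simp)
  have hphase : lphase θ (m + k) n ≠ lphase θ (m - k) n :=
    mt lphase_add_eq_lphase_sub_iff.1 (not_exists.2 hθ)
  rw [twist_gauge_tmul hN hL ha hb hv, starGauge_twist_tmul hstp hN hL ha hb hv]
  exact (smul_left_injective ℂ (smul_ne_zero hn (tmul_ne_zero hab hv0))).ne hphase

theorem gauge_actions_not_intertwined_general [SetLike.GradedMonoid 𝒜] {x y w : A}
    (hx : x ∈ 𝒜 (1, 0)) (hy : y ∈ 𝒜 (-1, 0)) (hw : w ∈ 𝒜 (1, -1))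
    (hxyw : ¬ IsNilpotent (x * y * w))
    (hstp : ∀ (p q : ℤ × ℤ), ∀ a ∈ 𝒜 p, ∀ a' ∈ 𝒜 q, stp a a' = phase θ p q • (a * a'))
    (hV : ∃ n : ℤ, (∀ j : ℤ, θ * n ≠ j) ∧ 𝒱 n ≠ ⊥)
    (hN : ∀ (n : ℤ), ∀ v ∈ 𝒱 n, N v = (n : ℂ) • v)
    (hL : ∀ (m n : ℤ) (a : A) (v : V), a ∈ 𝒜 (m + n, -m) → v ∈ 𝒱 n →
      L (a ⊗ₜ[ℂ] v) = lphase θ m n • (a ⊗ₜ[ℂ] v)) :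
    ∃ b ∈ totalDeg 𝒜 0, ∃ ξ ∈ assocModule 𝒜 𝒱,
      L (TensorProduct.map (LinearMap.mulRight ℂ b) N ξ)
        ≠ TensorProduct.map (stp.flip b) N (L ξ) := by
  obtain ⟨n, hθ, hVn⟩ := hV
  obtain ⟨v, hv, hv0⟩ := Submodule.exists_mem_ne_zero_of_ne_bot hVn
  obtain ⟨a, ha, haw⟩ := exists_mem_zsmul_mul_ne_zero 𝒜 hx (by simpa using hy) hxyw n
  have ha : a ∈ 𝒜 (0 + n, -0) := by simpa using ha
  exact ⟨w, mem_totalDeg (by simp) hw, a ⊗ₜ[ℂ] v, tmul_mem_assocModule ha hv,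
    twist_gauge_tmul_ne_starGauge_twist_tmul hstp hN hL ha hw hv haw hv0 (by simpa using hθ)⟩

end GaugeAction

/-- if `θ` is irrational and the `O(U(1))`-coaction on `V` is non-trivial
(`Vⁿ ≠ 0` for some `n ≠ 0`), then the left `B`-module isomorphism
`L_V : E_A(V) → E_{A_θ}(V)` does not intertwine the actions of infinitesimal gauge
transformations: there are `b ∈ B` and `ξ ∈ E_A(V)` with
`L_V(ξ ◁ (b⊗X)) ≠ L_V(ξ) ◁_θ (b⊗X)`. -/
theorem gauge_actions_not_intertwined
    (A : Type) [CommRing A] [Algebra ℂ A]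
    (𝒜 : ℤ × ℤ → Submodule ℂ A) [GradedAlgebra 𝒜]
    (z1 z2 z1s z2s : A)
    (hz1 : z1 ∈ 𝒜 (1, 0)) (hz2 : z2 ∈ 𝒜 (0, 1))
    (hz1s : z1s ∈ 𝒜 (-1, 0)) (hz2s : z2s ∈ 𝒜 (0, -1))
    (hrel : z1s * z1 + z2s * z2 = 1)
    (huniv : ∀ (C : Type) [CommRing C] [Algebra ℂ C] (w1 w2 w1s w2s : C),
      w1s * w1 + w2s * w2 = 1 →
      ∃! f : A →ₐ[ℂ] C, f z1 = w1 ∧ f z2 = w2 ∧ f z1s = w1s ∧ f z2s = w2s)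
    (θ : ℝ) (hθ : Irrational θ)
    (stp : A →ₗ[ℂ] A →ₗ[ℂ] A)
    (hstp : ∀ (p q : ℤ × ℤ), ∀ a ∈ 𝒜 p, ∀ a' ∈ 𝒜 q, stp a a' = phase θ p q • (a * a'))
    (V : Type) [AddCommGroup V] [Module ℂ V]
    (𝒱 : ℤ → Submodule ℂ V) [DirectSum.Decomposition 𝒱]
    (hV : ∃ n : ℤ, n ≠ 0 ∧ 𝒱 n ≠ ⊥)
    -- the Euler operator of `V`, multiplying `Vⁿ` by `n` (implementing `X(tⁿ) = n`)
    (N : V →ₗ[ℂ] V)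
    (hN : ∀ (n : ℤ), ∀ v ∈ 𝒱 n, N v = (n : ℂ) • v)
    -- the natural isomorphism `L_V`
    (L : A ⊗[ℂ] V →ₗ[ℂ] A ⊗[ℂ] V)
    (hL : ∀ (m n : ℤ) (a : A) (v : V), a ∈ 𝒜 (m + n, -m) → v ∈ 𝒱 n →
      L (a ⊗ₜ[ℂ] v) = lphase θ m n • (a ⊗ₜ[ℂ] v)) :
    ∃ b ∈ totalDeg 𝒜 0, ∃ ξ ∈ assocModule 𝒜 𝒱,
      L (TensorProduct.map (LinearMap.mulRight ℂ b) N ξ)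
        ≠ TensorProduct.map (stp.flip b) N (L ξ) := by
  obtain ⟨n, hn, hVn⟩ := hV
  have hb : z1 * z2s ∈ 𝒜 (1, -1) := by simpa using SetLike.mul_mem_graded hz1 hz2s
  obtain ⟨f, ⟨hf1, -, hf1s, hf2s⟩, -⟩ := huniv ℂ 1 1 (1 / 2) (1 / 2) (by norm_num)
  have hnil : ¬ IsNilpotent (z1 * z1s * (z1 * z2s)) := fun h => by
    simpa [hf1, hf1s, hf2s] using h.map f
  exact gauge_actions_not_intertwined_general hz1 hz1s hb hnil hstp
    ⟨n, (hθ.mul_intCast hn).ne_int, hVn⟩ hN hL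
end
end

section
/- Suppose θ ∈ ℝ is irrational and the connection form ω = ω⁰ + α ∈ Con(A,δ) is not O(T²)-coinvariant, i.e., α ∈ B dB has a nonzero ℤ²-homogeneous component of degree (m',−m') for some m' ≠ 0. Then the phase maps L⁰ and L¹ do not intertwine the classical and deformed covariant derivatives: there exists a ℤ²-homogeneous a ∈ A with D̄_θ(L⁰(a)) ≠ L¹(D̄(a)). -/
/-!
The composite `T := φbar ∘ L1` acts on `Ω¹(A)`, on classes of `ℤ²`-degree `(m + n, -m)`, as the
scalar `e^{πiθmn}`, and `φ` turns `a ⋆ y` into `a · φ y` up to the phase `e^{-πiθnk}`, for `a` of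
degree `(m + n, -m)` and `y` of degree `(k, -k)`. The two phases combine to `e^{πiθmn}`, whatever
`k` is, so that `T (φ (a ⋆ y)) = e^{πiθmn} a · φ y` for every `y` of total degree `0`. If the
covariant derivatives are intertwined at `a` and `n ≠ 0`, applying `T ∘ φbar` to that equation
therefore gives `T² (a ω) = e^{2πiθmn} a ω`.

On the component `a α_k` the operator `T²` has eigenvalue `e^{2πiθ(m + k)n}`; for irrational `θ`
these eigenvalues are pairwise distinct, so independence of eigenspaces forces `a α_k = 0` for
`k ≠ 0`. The elements `a` with `n ≠ 0` generate the unit ideal (by the sphere relation, `z1` and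
`z2` suffice), hence `α_k = 0`.
-/

set_option synthInstance.maxHeartbeats 1000000
set_option maxHeartbeats 1000000

open scoped TensorProduct
noncomputable section

section Phases

theorem phase_eq_one {p q : ℤ × ℤ} (h : p.1 * q.2 = p.2 * q.1) (θ : ℝ) : phase θ p q = 1 := by
  simp [phase, sub_eq_zero.mpr h]

theorem phase_eq_one_of_add_eq_zero {p q : ℤ × ℤ} (hp : p.1 + p.2 = 0) (hq : q.1 + q.2 = 0)
    (θ : ℝ) : phase θ p q = 1 :=
  phase_eq_one (by linear_combination p.1 * hq - q.1 * hp) θ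

theorem phase_neg_self (θ : ℝ) (q : ℤ × ℤ) : phase θ (-q) q = 1 :=
  phase_eq_one (by simp only [Prod.fst_neg, Prod.snd_neg]; ring) θ

theorem phase_zero_left (θ : ℝ) (q : ℤ × ℤ) : phase θ 0 q = 1 :=
  phase_eq_one (by simp) θ

theorem phase_zero_right (θ : ℝ) (p : ℤ × ℤ) : phase θ p 0 = 1 :=
  phase_eq_one (by simp) θ

theorem phase_cocycle (θ : ℝ) (p q r : ℤ × ℤ) :
    phase θ p q * phase θ (p + q) r = phase θ p (q + r) * phase θ q r := by
  simp only [phase, ← Complex.exp_add, Prod.fst_add, Prod.snd_add]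
  congr 1
  push_cast
  ring

theorem phase_mul_lphase_add (θ : ℝ) (m n k : ℤ) :
    phase θ (m + n, -m) (k, -k) * lphase θ (m + k) n = lphase θ m n := by
  simp only [phase, lphase, ← Complex.exp_add]
  congr 1
  push_cast
  ring

theorem lphase_sq_injective {θ : ℝ} (hθ : Irrational θ) {n : ℤ} (hn : n ≠ 0) :
    Function.Injective fun m : ℤ => lphase θ m n ^ 2 := by
  intro m k h
  simp only [lphase, ← Complex.exp_nat_mul, Complex.exp_eq_exp_iff_exists_int] at h
  obtain ⟨N, hN⟩ := h
  have hmul : (2 * Real.pi * Complex.I : ℂ) * (θ * (((m - k) * n : ℤ) : ℂ))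
      = (2 * Real.pi * Complex.I : ℂ) * N := by
    push_cast at hN ⊢
    linear_combination hN
  have hθN : θ * (((m - k) * n : ℤ) : ℝ) = N := by
    exact_mod_cast mul_left_cancel₀ Complex.two_pi_I_ne_zero hmul
  by_contra hne
  exact (hθ.mul_intCast (mul_ne_zero (sub_ne_zero.mpr hne) hn)).ne_int N hθN

end Phases

section Eigenspaces

variable {R V : Type*} [CommRing R] [AddCommGroup V] [Module R V] {f : Module.End R V}

theorem mem_eigenspace_sq {μ : R} {v : V} (hv : v ∈ f.eigenspace μ) :
    v ∈ (f ^ 2).eigenspace (μ ^ 2) := by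
  rw [Module.End.mem_eigenspace_iff] at hv ⊢
  rw [sq, Module.End.mul_apply, hv, map_smul, hv, smul_smul, sq]

theorem eq_zero_of_sum_mem_eigenspace [IsDomain R] [Module.IsTorsionFree R V] {ι : Type*}
    {μ : ι → R} (hμ : Function.Injective μ) {s : Finset ι} {v : ι → V}
    (hv : ∀ i ∈ s, v i ∈ f.eigenspace (μ i)) {ν : R}
    (hsum : ∑ i ∈ s, v i ∈ f.eigenspace ν) {i : ι} (hi : i ∈ s) (hne : μ i ≠ ν) : v i = 0 := by
  have hrel : ∑ j ∈ s, (μ j - ν) • v j = 0 := by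
    rw [Module.End.mem_eigenspace_iff, map_sum, Finset.smul_sum, ← sub_eq_zero,
      ← Finset.sum_sub_distrib] at hsum
    rw [← hsum]
    refine Finset.sum_congr rfl fun j hj => ?_
    rw [Module.End.mem_eigenspace_iff.mp (hv j hj), sub_smul]
  have hterm : (μ i - ν) • v i = 0 :=
    (iSupIndep_iff_finsetSum_eq_zero_imp_eq_zero _).mp (f.eigenspaces_iSupIndep.comp hμ) s _
      (fun j hj => Submodule.smul_mem _ _ (hv j hj)) hrel i hi
  exact (smul_eq_zero.mp hterm).resolve_left (sub_ne_zero.mpr hne)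

end Eigenspaces

section UnitIdeal

variable {R A M : Type*} [Ring R] [CommRing A] [AddCommGroup M] [Module R M] [Module A M]
  {N : Submodule R M}

theorem smul_mem_of_mkQ_action {lact : A → Module.End R (M ⧸ N)}
    (hlact : ∀ (a : A) (x : M), lact a (N.mkQ x) = N.mkQ (a • x)) (a : A) {x : M} (hx : x ∈ N) :
    a • x ∈ N := by
  rw [← Submodule.ker_mkQ N, LinearMap.mem_ker] at hx ⊢
  rw [← hlact, hx, map_zero]

theorem mkQ_eq_zero_of_ideal_span_eq_top {lact : A → Module.End R (M ⧸ N)}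
    (hlact : ∀ (a : A) (x : M), lact a (N.mkQ x) = N.mkQ (a • x)) {S : Set A}
    (hS : Ideal.span S = ⊤) {x : M} (h : ∀ a ∈ S, N.mkQ (a • x) = 0) : N.mkQ x = 0 := by
  let N' : Submodule A M := { N with smul_mem' := fun a _ => smul_mem_of_mkQ_action hlact a }
  have hmem : ∀ y, N.mkQ y = 0 ↔ y ∈ N' := fun _ => Submodule.Quotient.mk_eq_zero N
  exact (hmem x).mpr
    (Submodule.mem_of_span_top_of_smul_mem N' S hS x fun a => (hmem _).mp (h a a.2))

end UnitIdeal

section TotalDegree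

variable {M M' : Type} {P : Type*} [AddCommMonoid M] [Module ℂ M] [AddCommMonoid M'] [Module ℂ M']
  [AddCommMonoid P] [Module ℂ P] {ℳ : ℤ × ℤ → Submodule ℂ M} {ℳ' : ℤ × ℤ → Submodule ℂ M'}

theorem le_totalDeg {p : ℤ × ℤ} {n : ℤ} (h : p.1 + p.2 = n) : ℳ p ≤ totalDeg ℳ n :=
  le_iSup₂_of_le (f := fun (p : ℤ × ℤ) (_ : p.1 + p.2 = n) => ℳ p) p h le_rfl

theorem totalDeg_le {n : ℤ} {S : Submodule ℂ M} (h : ∀ p : ℤ × ℤ, p.1 + p.2 = n → ℳ p ≤ S) :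
    totalDeg ℳ n ≤ S :=
  iSup₂_le h

theorem apply_apply_mem_of_mem_totalDeg (f : M →ₗ[ℂ] M' →ₗ[ℂ] P) {S : Submodule ℂ P} {n n' : ℤ}
    (h : ∀ p q : ℤ × ℤ, p.1 + p.2 = n → q.1 + q.2 = n' → ∀ x ∈ ℳ p, ∀ y ∈ ℳ' q, f x y ∈ S)
    {x : M} (hx : x ∈ totalDeg ℳ n) {y : M'} (hy : y ∈ totalDeg ℳ' n') : f x y ∈ S := by
  suffices totalDeg ℳ n ≤ S.comap (f.flip y) from this hx
  refine totalDeg_le fun p hp x hx => ?_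
  suffices totalDeg ℳ' n' ≤ S.comap (f x) from this hy
  exact totalDeg_le fun q hq y hy => h p q hp hq x hx y hy

end TotalDegree

section GradedAlgebra

variable {A : Type} [CommRing A] [Algebra ℂ A] {𝒜 : ℤ × ℤ → Submodule ℂ A}

section TensorDegree

theorem tmul_mem_tensorDeg {p q : ℤ × ℤ} {a b : A} (ha : a ∈ 𝒜 p) (hb : b ∈ 𝒜 q) :
    a ⊗ₜ[ℂ] b ∈ tensorDeg 𝒜 (p + q) :=
  Submodule.subset_span ⟨p, q, a, ha, b, hb, rfl, rfl⟩

theorem tensorDeg_le {p : ℤ × ℤ} {S : Submodule ℂ (A ⊗[ℂ] A)}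
    (h : ∀ q r : ℤ × ℤ, q + r = p → ∀ a ∈ 𝒜 q, ∀ b ∈ 𝒜 r, a ⊗ₜ[ℂ] b ∈ S) :
    tensorDeg 𝒜 p ≤ S := by
  rw [tensorDeg, Submodule.span_le]
  rintro _ ⟨q, r, a, ha, b, hb, hqr, rfl⟩
  exact h q r hqr a ha b hb

theorem map_mulLeft_id_apply (a : A) (x : A ⊗[ℂ] A) :
    TensorProduct.map (LinearMap.mulLeft ℂ a) LinearMap.id x = a • x := by
  induction x using TensorProduct.induction_on with
  | zero => simp
  | tmul b c => rfl
  | add x y hx hy => rw [map_add, hx, hy, smul_add]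

variable [GradedAlgebra 𝒜]

theorem smul_mem_tensorDeg {p q : ℤ × ℤ} {a : A} (ha : a ∈ 𝒜 p) {x : A ⊗[ℂ] A}
    (hx : x ∈ tensorDeg 𝒜 q) : a • x ∈ tensorDeg 𝒜 (p + q) := by
  rw [← map_mulLeft_id_apply]
  suffices tensorDeg 𝒜 q ≤ (tensorDeg 𝒜 (p + q)).comap
      (TensorProduct.map (LinearMap.mulLeft ℂ a) LinearMap.id) from this hx
  refine tensorDeg_le fun r t hrt b hb c hc => ?_
  rw [← hrt, ← add_assoc]
  exact tmul_mem_tensorDeg (SetLike.mul_mem_graded ha hb) hc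

theorem one_tmul_sub_tmul_one_mem_tensorDeg {p : ℤ × ℤ} {a : A} (ha : a ∈ 𝒜 p) :
    (1 : A) ⊗ₜ[ℂ] a - a ⊗ₜ[ℂ] (1 : A) ∈ tensorDeg 𝒜 p := by
  have h1 : (1 : A) ∈ 𝒜 0 := SetLike.GradedOne.one_mem
  simpa only [zero_add, add_zero] using
    sub_mem (zero_add p ▸ tmul_mem_tensorDeg h1 ha) (add_zero p ▸ tmul_mem_tensorDeg ha h1)

end TensorDegree

section StarProduct

/-- `stp` is the star product `⋆_θ` of the graded algebra `𝒜`. -/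
def IsStarProduct (𝒜 : ℤ × ℤ → Submodule ℂ A) (θ : ℝ) (stp : A →ₗ[ℂ] A →ₗ[ℂ] A) : Prop :=
  ∀ p q : ℤ × ℤ, ∀ a ∈ 𝒜 p, ∀ b ∈ 𝒜 q, stp a b = phase θ p q • (a * b)

/-- `φ` is the phase map `φ_θ : A_θ ⊗ A_θ → A ⊗ A`, which induces the bijection `φ̄_θ` between the
modules of one-forms. -/
def IsPhaseMap (𝒜 : ℤ × ℤ → Submodule ℂ A) (θ : ℝ) (φ : A ⊗[ℂ] A →ₗ[ℂ] A ⊗[ℂ] A) : Prop :=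
  ∀ p q : ℤ × ℤ, ∀ a ∈ 𝒜 p, ∀ b ∈ 𝒜 q, φ (a ⊗ₜ[ℂ] b) = phase θ p q • (a ⊗ₜ[ℂ] b)

variable {θ : ℝ} {stp : A →ₗ[ℂ] A →ₗ[ℂ] A} {φ : A ⊗[ℂ] A →ₗ[ℂ] A ⊗[ℂ] A}

theorem IsStarProduct.apply_eq_mul (hstp : IsStarProduct 𝒜 θ stp) {p q : ℤ × ℤ}
    (hpq : phase θ p q = 1) {a b : A} (ha : a ∈ 𝒜 p) (hb : b ∈ 𝒜 q) : stp a b = a * b := by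
  rw [hstp p q a ha b hb, hpq, one_smul]

theorem IsPhaseMap.apply_tmul_eq_self (hφ : IsPhaseMap 𝒜 θ φ) {p q : ℤ × ℤ}
    (hpq : phase θ p q = 1) {a b : A} (ha : a ∈ 𝒜 p) (hb : b ∈ 𝒜 q) :
    φ (a ⊗ₜ[ℂ] b) = a ⊗ₜ[ℂ] b := by
  rw [hφ p q a ha b hb, hpq, one_smul]

theorem IsPhaseMap.apply_mem_tensorDeg (hφ : IsPhaseMap 𝒜 θ φ) {p : ℤ × ℤ} {x : A ⊗[ℂ] A}
    (hx : x ∈ tensorDeg 𝒜 p) : φ x ∈ tensorDeg 𝒜 p := by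
  suffices tensorDeg 𝒜 p ≤ (tensorDeg 𝒜 p).comap φ from this hx
  refine tensorDeg_le fun q r hqr a ha b hb => ?_
  rw [Submodule.mem_comap, hφ q r a ha b hb, ← hqr]
  exact Submodule.smul_mem _ _ (tmul_mem_tensorDeg ha hb)

variable [GradedAlgebra 𝒜]

theorem IsPhaseMap.apply_one_tmul_sub_tmul_one (hφ : IsPhaseMap 𝒜 θ φ) {p : ℤ × ℤ} {a : A}
    (ha : a ∈ 𝒜 p) :
    φ ((1 : A) ⊗ₜ[ℂ] a - a ⊗ₜ[ℂ] (1 : A)) = (1 : A) ⊗ₜ[ℂ] a - a ⊗ₜ[ℂ] (1 : A) := by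
  have h1 : (1 : A) ∈ 𝒜 0 := SetLike.GradedOne.one_mem
  rw [map_sub, hφ.apply_tmul_eq_self (phase_zero_left θ p) h1 ha,
    hφ.apply_tmul_eq_self (phase_zero_right θ p) ha h1]

theorem IsPhaseMap.apply_rTensor_star (hφ : IsPhaseMap 𝒜 θ φ) (hstp : IsStarProduct 𝒜 θ stp)
    {p q : ℤ × ℤ} {a : A} (ha : a ∈ 𝒜 p) {x : A ⊗[ℂ] A} (hx : x ∈ tensorDeg 𝒜 q) :
    φ ((stp a).rTensor A x) = phase θ p q • a • φ x := by
  rw [← map_mulLeft_id_apply]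
  suffices tensorDeg 𝒜 q ≤ LinearMap.eqLocus (φ ∘ₗ (stp a).rTensor A)
      (phase θ p q • TensorProduct.map (LinearMap.mulLeft ℂ a) LinearMap.id ∘ₗ φ) from this hx
  refine tensorDeg_le fun r t hrt b hb c hc => ?_
  change φ (stp a b ⊗ₜ[ℂ] c)
    = phase θ p q • TensorProduct.map (LinearMap.mulLeft ℂ a) LinearMap.id (φ (b ⊗ₜ[ℂ] c))
  rw [hstp p r a ha b hb, ← TensorProduct.smul_tmul', map_smul,
    hφ (p + r) t _ (SetLike.mul_mem_graded ha hb) c hc, hφ r t b hb c hc, map_smul, smul_smul,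
    smul_smul, phase_cocycle, hrt]
  rfl

end StarProduct

section Forms

variable {θ : ℝ} {φ : A ⊗[ℂ] A →ₗ[ℂ] A ⊗[ℂ] A}

/-- The representative `a ⊗ b - ab ⊗ 1` of the one-form `a db` in `A ⊗ A`. -/
def formRep : A →ₗ[ℂ] A →ₗ[ℂ] A ⊗[ℂ] A :=
  TensorProduct.mk ℂ A A - (LinearMap.mul ℂ A).compr₂ ((TensorProduct.mk ℂ A A).flip 1)

/-- The representatives in `A ⊗ A` of the one-forms in `B dB`, where `B` is the
total-degree-`0` subalgebra. -/
def baseForms (𝒜 : ℤ × ℤ → Submodule ℂ A) : Submodule ℂ (A ⊗[ℂ] A) :=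
  Submodule.span ℂ {y | ∃ b ∈ totalDeg 𝒜 0, ∃ b' ∈ totalDeg 𝒜 0, y = formRep b b'}

theorem formRep_apply (a b : A) : formRep a b = a ⊗ₜ[ℂ] b - (a * b) ⊗ₜ[ℂ] (1 : A) := rfl

theorem baseForms_le {S : Submodule ℂ (A ⊗[ℂ] A)}
    (h : ∀ p q : ℤ × ℤ, p.1 + p.2 = 0 → q.1 + q.2 = 0 →
      ∀ a ∈ 𝒜 p, ∀ b ∈ 𝒜 q, formRep a b ∈ S) : baseForms 𝒜 ≤ S := by
  rw [baseForms, Submodule.span_le]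
  rintro _ ⟨b, hb, b', hb', rfl⟩
  exact apply_apply_mem_of_mem_totalDeg formRep h hb hb'

variable [GradedAlgebra 𝒜]

theorem formRep_mem_tensorDeg {p q : ℤ × ℤ} {a b : A} (ha : a ∈ 𝒜 p) (hb : b ∈ 𝒜 q) :
    formRep a b ∈ tensorDeg 𝒜 (p + q) := by
  have h1 : (1 : A) ∈ 𝒜 0 := SetLike.GradedOne.one_mem
  exact sub_mem (tmul_mem_tensorDeg ha hb)
    (add_zero (p + q) ▸ tmul_mem_tensorDeg (SetLike.mul_mem_graded ha hb) h1)

theorem IsPhaseMap.apply_formRep (hφ : IsPhaseMap 𝒜 θ φ) {p q : ℤ × ℤ} (hpq : phase θ p q = 1)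
    {a b : A} (ha : a ∈ 𝒜 p) (hb : b ∈ 𝒜 q) : φ (formRep a b) = formRep a b := by
  have h1 : (1 : A) ∈ 𝒜 0 := SetLike.GradedOne.one_mem
  rw [formRep_apply, map_sub, hφ.apply_tmul_eq_self hpq ha hb,
    hφ.apply_tmul_eq_self (phase_zero_right θ _) (SetLike.mul_mem_graded ha hb) h1]

theorem baseForms_le_totalDeg : baseForms 𝒜 ≤ totalDeg (tensorDeg 𝒜) 0 :=
  baseForms_le fun p q hp hq _ ha _ hb =>
    le_totalDeg (by simp only [Prod.fst_add, Prod.snd_add]; linarith) (formRep_mem_tensorDeg ha hb)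

theorem IsPhaseMap.apply_of_mem_baseForms (hφ : IsPhaseMap 𝒜 θ φ) {x : A ⊗[ℂ] A}
    (hx : x ∈ baseForms 𝒜) : φ x = x := by
  suffices baseForms 𝒜 ≤ LinearMap.eqLocus φ LinearMap.id from this hx
  exact baseForms_le fun p q hp hq a ha b hb =>
    hφ.apply_formRep (phase_eq_one_of_add_eq_zero hp hq θ) ha hb

end Forms

section HopfConnection

variable {θ : ℝ} {stp : A →ₗ[ℂ] A →ₗ[ℂ] A} {φ : A ⊗[ℂ] A →ₗ[ℂ] A ⊗[ℂ] A} {z1 z2 z1s z2s : A}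

/-- The representative in `A ⊗ A` of the connection form `ω⁰ = z₁* dz₁ + z₂* dz₂`. -/
def hopfConnection (z1 z2 z1s z2s : A) : A ⊗[ℂ] A :=
  formRep z1s z1 + formRep z2s z2

variable [GradedAlgebra 𝒜]

theorem hopfConnection_mem_tensorDeg (hz1 : z1 ∈ 𝒜 (1, 0)) (hz2 : z2 ∈ 𝒜 (0, 1))
    (hz1s : z1s ∈ 𝒜 (-1, 0)) (hz2s : z2s ∈ 𝒜 (0, -1)) :
    hopfConnection z1 z2 z1s z2s ∈ tensorDeg 𝒜 0 :=
  add_mem (neg_add_cancel ((1, 0) : ℤ × ℤ) ▸ formRep_mem_tensorDeg hz1s hz1)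
    (neg_add_cancel ((0, 1) : ℤ × ℤ) ▸ formRep_mem_tensorDeg hz2s hz2)

theorem IsPhaseMap.apply_hopfConnection (hφ : IsPhaseMap 𝒜 θ φ) (hz1 : z1 ∈ 𝒜 (1, 0))
    (hz2 : z2 ∈ 𝒜 (0, 1)) (hz1s : z1s ∈ 𝒜 (-1, 0)) (hz2s : z2s ∈ 𝒜 (0, -1)) :
    φ (hopfConnection z1 z2 z1s z2s) = hopfConnection z1 z2 z1s z2s := by
  rw [hopfConnection, map_add, hφ.apply_formRep (phase_neg_self θ (1, 0)) hz1s hz1,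
    hφ.apply_formRep (phase_neg_self θ (0, 1)) hz2s hz2]

theorem IsStarProduct.star_formRep (hstp : IsStarProduct 𝒜 θ stp) {p q : ℤ × ℤ}
    (hpq : phase θ p q = 1) {a b : A} (ha : a ∈ 𝒜 p) (hb : b ∈ 𝒜 q) :
    stp a 1 ⊗ₜ[ℂ] b - stp a b ⊗ₜ[ℂ] (1 : A) = formRep a b := by
  rw [hstp.apply_eq_mul (phase_zero_right θ p) ha SetLike.GradedOne.one_mem, mul_one,
    hstp.apply_eq_mul hpq ha hb, formRep_apply]

theorem IsStarProduct.star_hopfConnection (hstp : IsStarProduct 𝒜 θ stp) (hz1 : z1 ∈ 𝒜 (1, 0))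
    (hz2 : z2 ∈ 𝒜 (0, 1)) (hz1s : z1s ∈ 𝒜 (-1, 0)) (hz2s : z2s ∈ 𝒜 (0, -1)) :
    stp z1s 1 ⊗ₜ[ℂ] z1 - stp z1s z1 ⊗ₜ[ℂ] (1 : A)
      + (stp z2s 1 ⊗ₜ[ℂ] z2 - stp z2s z2 ⊗ₜ[ℂ] (1 : A)) = hopfConnection z1 z2 z1s z2s := by
  rw [hopfConnection, hstp.star_formRep (phase_neg_self θ (1, 0)) hz1s hz1,
    hstp.star_formRep (phase_neg_self θ (0, 1)) hz2s hz2]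

end HopfConnection

section Intertwining

/-- `T` is the classical counterpart `φ̄_θ ∘ L¹` of the phase map `L¹`, acting on the module of
one-forms presented as `(A ⊗ A) ⧸ N`. -/
def IsPhaseOperator (𝒜 : ℤ × ℤ → Submodule ℂ A) (θ : ℝ) {N : Submodule ℂ (A ⊗[ℂ] A)}
    (T : Module.End ℂ ((A ⊗[ℂ] A) ⧸ N)) : Prop :=
  ∀ m n : ℤ, ∀ x ∈ tensorDeg 𝒜 (m + n, -m), T (N.mkQ x) = lphase θ m n • N.mkQ x

/-- `D` is the covariant derivative `a ↦ da - n a ω`, for `a` of total degree `n`, of the connection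
form represented by `ω`; the action `lact` on the one-forms `(A ⊗ A) ⧸ N` may be the classical or
the deformed one. -/
def IsCovariantDerivative (𝒜 : ℤ × ℤ → Submodule ℂ A) {N : Submodule ℂ (A ⊗[ℂ] A)}
    (lact : A → Module.End ℂ ((A ⊗[ℂ] A) ⧸ N)) (ω : A ⊗[ℂ] A)
    (D : A →ₗ[ℂ] (A ⊗[ℂ] A) ⧸ N) : Prop :=
  ∀ n : ℤ, ∀ a ∈ totalDeg 𝒜 n,
    D a = N.mkQ ((1 : A) ⊗ₜ[ℂ] a - a ⊗ₜ[ℂ] (1 : A)) - (n : ℂ) • lact a (N.mkQ ω)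

variable [GradedAlgebra 𝒜] {θ : ℝ} {stp : A →ₗ[ℂ] A →ₗ[ℂ] A} {φ : A ⊗[ℂ] A →ₗ[ℂ] A ⊗[ℂ] A}
  {N Nθ : Submodule ℂ (A ⊗[ℂ] A)} {T : Module.End ℂ ((A ⊗[ℂ] A) ⧸ N)} {m n : ℤ} {a : A}

theorem IsPhaseOperator.mkQ_smul_mem_eigenspace (hT : IsPhaseOperator 𝒜 θ T)
    (ha : a ∈ 𝒜 (m + n, -m)) {k : ℤ} {x : A ⊗[ℂ] A} (hx : x ∈ tensorDeg 𝒜 (k, -k)) :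
    N.mkQ (a • x) ∈ T.eigenspace (lphase θ (m + k) n) := by
  rw [Module.End.mem_eigenspace_iff]
  have hdeg : ((m + n, -m) : ℤ × ℤ) + (k, -k) = (m + k + n, -(m + k)) := by
    rw [Prod.mk_add_mk]; congr 1 <;> ring
  exact hT _ _ _ (hdeg ▸ smul_mem_tensorDeg ha hx)

theorem IsPhaseOperator.apply_mkQ_phaseMap_star (hT : IsPhaseOperator 𝒜 θ T)
    (hstp : IsStarProduct 𝒜 θ stp) (hφ : IsPhaseMap 𝒜 θ φ) (ha : a ∈ 𝒜 (m + n, -m))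
    {y : A ⊗[ℂ] A} (hy : y ∈ totalDeg (tensorDeg 𝒜) 0) :
    T (N.mkQ (φ ((stp a).rTensor A y))) = lphase θ m n • N.mkQ (a • φ y) := by
  rw [← map_mulLeft_id_apply]
  suffices totalDeg (tensorDeg 𝒜) 0 ≤ LinearMap.eqLocus (T ∘ₗ N.mkQ ∘ₗ φ ∘ₗ (stp a).rTensor A)
      (lphase θ m n • N.mkQ ∘ₗ TensorProduct.map (LinearMap.mulLeft ℂ a) LinearMap.id ∘ₗ φ) from
    this hy
  refine totalDeg_le fun ⟨k, l⟩ hkl x hx => ?_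
  obtain rfl : l = -k := by linarith
  change T (N.mkQ (φ ((stp a).rTensor A x)))
    = lphase θ m n • N.mkQ (TensorProduct.map (LinearMap.mulLeft ℂ a) LinearMap.id (φ x))
  have heig := Module.End.mem_eigenspace_iff.mp
    (hT.mkQ_smul_mem_eigenspace ha (hφ.apply_mem_tensorDeg hx))
  rw [map_mulLeft_id_apply, hφ.apply_rTensor_star hstp ha hx, map_smul, map_smul, heig, smul_smul,
    phase_mul_lphase_add]

theorem IsPhaseOperator.mkQ_smul_mem_eigenspace_sq_of_intertwined (hT : IsPhaseOperator 𝒜 θ T)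
    (hstp : IsStarProduct 𝒜 θ stp) (hφ : IsPhaseMap 𝒜 θ φ) (hn : n ≠ 0)
    (ha : a ∈ 𝒜 (m + n, -m)) {ω ωθ : A ⊗[ℂ] A} (hωθ : ωθ ∈ totalDeg (tensorDeg 𝒜) 0)
    (hω : φ ωθ = ω)
    (h : lphase θ m n • (N.mkQ (φ ((1 : A) ⊗ₜ[ℂ] a - a ⊗ₜ[ℂ] (1 : A)))
          - (n : ℂ) • N.mkQ (φ ((stp a).rTensor A ωθ)))
        = T (N.mkQ ((1 : A) ⊗ₜ[ℂ] a - a ⊗ₜ[ℂ] (1 : A)) - (n : ℂ) • N.mkQ (a • ω))) :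
    N.mkQ (a • ω) ∈ (T ^ 2).eigenspace (lphase θ m n ^ 2) := by
  have hTda := hT m n _ (one_tmul_sub_tmul_one_mem_tensorDeg ha)
  have hred : lphase θ m n • N.mkQ (φ ((stp a).rTensor A ωθ)) = T (N.mkQ (a • ω)) := by
    rw [hφ.apply_one_tmul_sub_tmul_one ha, map_sub T, hTda, smul_sub, sub_right_inj, map_smul,
      smul_comm] at h
    exact smul_right_injective _ (Int.cast_ne_zero.mpr hn) h
  rw [Module.End.mem_eigenspace_iff, sq, Module.End.mul_apply, ← hred, map_smul,
    hT.apply_mkQ_phaseMap_star hstp hφ ha hωθ, hω, smul_smul, sq]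

theorem IsPhaseOperator.mkQ_smul_component_eq_zero (hT : IsPhaseOperator 𝒜 θ T)
    (hθ : Irrational θ) (hn : n ≠ 0) (ha : a ∈ 𝒜 (m + n, -m)) {ω₀ : A ⊗[ℂ] A}
    (hω₀ : ω₀ ∈ tensorDeg 𝒜 0) {s : Finset ℤ} {αc : ℤ → A ⊗[ℂ] A}
    (hαc : ∀ k ∈ s, αc k ∈ tensorDeg 𝒜 (k, -k))
    (h : N.mkQ (a • (ω₀ + ∑ k ∈ s, αc k)) ∈ (T ^ 2).eigenspace (lphase θ m n ^ 2))
    {k : ℤ} (hk : k ∈ s) (hk0 : k ≠ 0) : N.mkQ (a • αc k) = 0 := by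
  have hinj : Function.Injective fun k : ℤ => lphase θ (m + k) n ^ 2 :=
    (lphase_sq_injective hθ hn).comp (add_right_injective m)
  have hω₀eig : N.mkQ (a • ω₀) ∈ (T ^ 2).eigenspace (lphase θ m n ^ 2) := by
    simpa only [add_zero] using mem_eigenspace_sq (hT.mkQ_smul_mem_eigenspace ha (k := 0) hω₀)
  have hsum : ∑ k ∈ s, N.mkQ (a • αc k) ∈ (T ^ 2).eigenspace (lphase θ m n ^ 2) := by
    rw [smul_add, map_add, Finset.smul_sum, map_sum] at h
    exact (Submodule.add_mem_iff_right _ hω₀eig).mp h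
  refine eq_zero_of_sum_mem_eigenspace hinj
    (fun i hi => mem_eigenspace_sq (hT.mkQ_smul_mem_eigenspace ha (hαc i hi))) hsum hk ?_
  simpa only [add_zero] using hinj.ne hk0

/-- The quotients by `N` and `Nθ` stand for arbitrary first-order calculi on `A` and `A_θ`, and `hω`
says that `ω_θ = φ̄_θ⁻¹(ω)`, where `ω` is the sum of a coinvariant form `ω₀` and the components
`αc k`. -/
theorem covariant_derivatives_not_intertwined_general
    (hspan : Ideal.span {a : A | ∃ m n : ℤ, n ≠ 0 ∧ a ∈ 𝒜 (m + n, -m)} = ⊤)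
    (hθ : Irrational θ) (hstp : IsStarProduct 𝒜 θ stp) (hφ : IsPhaseMap 𝒜 θ φ)
    {ω₀ ωθ : A ⊗[ℂ] A} (hω₀ : ω₀ ∈ tensorDeg 𝒜 0) {s : Finset ℤ} {αc : ℤ → A ⊗[ℂ] A}
    (hαc : ∀ k ∈ s, αc k ∈ tensorDeg 𝒜 (k, -k)) (hne : ∃ k ∈ s, k ≠ 0 ∧ N.mkQ (αc k) ≠ 0)
    (hωθ : ωθ ∈ totalDeg (tensorDeg 𝒜) 0) (hω : φ ωθ = ω₀ + ∑ k ∈ s, αc k)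
    {lact : A → Module.End ℂ ((A ⊗[ℂ] A) ⧸ N)}
    (hlact : ∀ (a : A) (x : A ⊗[ℂ] A), lact a (N.mkQ x) = N.mkQ (a • x))
    {lactθ : A → Module.End ℂ ((A ⊗[ℂ] A) ⧸ Nθ)}
    (hlactθ : ∀ (a : A) (x : A ⊗[ℂ] A), lactθ a (Nθ.mkQ x) = Nθ.mkQ ((stp a).rTensor A x))
    {D : A →ₗ[ℂ] (A ⊗[ℂ] A) ⧸ N}
    (hD : IsCovariantDerivative 𝒜 lact (ω₀ + ∑ k ∈ s, αc k) D)
    {Dθ : A →ₗ[ℂ] (A ⊗[ℂ] A) ⧸ Nθ} (hDθ : IsCovariantDerivative 𝒜 lactθ ωθ Dθ)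
    {L0 : A →ₗ[ℂ] A} (hL0 : ∀ m n : ℤ, ∀ a ∈ 𝒜 (m + n, -m), L0 a = lphase θ m n • a)
    {φbar : ((A ⊗[ℂ] A) ⧸ Nθ) →ₗ[ℂ] (A ⊗[ℂ] A) ⧸ N}
    (hφbar : ∀ x : A ⊗[ℂ] A, φbar (Nθ.mkQ x) = N.mkQ (φ x))
    {L1 : ((A ⊗[ℂ] A) ⧸ N) →ₗ[ℂ] (A ⊗[ℂ] A) ⧸ Nθ} (hL1 : IsPhaseOperator 𝒜 θ (φbar ∘ₗ L1)) :
    ∃ (p : ℤ × ℤ) (a : A), a ∈ 𝒜 p ∧ Dθ (L0 a) ≠ L1 (D a) := by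
  by_contra! hintertwined
  obtain ⟨k, hk, hk0, hαk⟩ := hne
  refine hαk (mkQ_eq_zero_of_ideal_span_eq_top hlact hspan ?_)
  rintro a ⟨m, n, hn, ha⟩
  have hat : a ∈ totalDeg 𝒜 n := le_totalDeg (by ring) ha
  have h := congrArg φbar (hintertwined _ a ha)
  rw [hL0 m n a ha, map_smul, map_smul, hDθ n a hat, hlactθ, map_sub, map_smul, hφbar, hφbar,
    hD n a hat, hlact] at h
  exact hL1.mkQ_smul_component_eq_zero hθ hn ha hω₀ hαc
    (hL1.mkQ_smul_mem_eigenspace_sq_of_intertwined hstp hφ hn ha hωθ hω h) hk hk0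

end Intertwining

theorem ideal_span_eq_top_of_sphere_relation {z1 z2 z1s z2s : A} (hz1 : z1 ∈ 𝒜 (1, 0))
    (hz2 : z2 ∈ 𝒜 (0, 1)) (hrel : z1s * z1 + z2s * z2 = 1) :
    Ideal.span {a : A | ∃ m n : ℤ, n ≠ 0 ∧ a ∈ 𝒜 (m + n, -m)} = ⊤ := by
  rw [Ideal.eq_top_iff_one, ← hrel]
  exact add_mem
    (Ideal.mul_mem_left _ _ (Ideal.subset_span ⟨0, 1, one_ne_zero, by simpa using hz1⟩))
    (Ideal.mul_mem_left _ _ (Ideal.subset_span ⟨-1, 1, one_ne_zero, by simpa using hz2⟩))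

end GradedAlgebra

/-- if `θ` is irrational and the connection `ω = ω⁰ + α ∈ Con(A,δ)` is
not `O(T²)`-coinvariant (`α` has a nonzero homogeneous component of degree `(m',−m')`
with `m' ≠ 0`), then the phase maps `L⁰` and `L¹` do not intertwine the classical and
deformed covariant derivatives: there is a `ℤ²`-homogeneous `a ∈ A` with
`D̄_θ(L⁰(a)) ≠ L¹(D̄(a))`. -/
theorem covariant_derivatives_not_intertwined
    (A : Type) [CommRing A] [Algebra ℂ A]
    (𝒜 : ℤ × ℤ → Submodule ℂ A) [GradedAlgebra 𝒜]
    (z1 z2 z1s z2s : A)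
    (hz1 : z1 ∈ 𝒜 (1, 0)) (hz2 : z2 ∈ 𝒜 (0, 1))
    (hz1s : z1s ∈ 𝒜 (-1, 0)) (hz2s : z2s ∈ 𝒜 (0, -1))
    (hrel : z1s * z1 + z2s * z2 = 1)
    (huniv : ∀ (C : Type) [CommRing C] [Algebra ℂ C] (w1 w2 w1s w2s : C),
      w1s * w1 + w2s * w2 = 1 →
      ∃! f : A →ₐ[ℂ] C, f z1 = w1 ∧ f z2 = w2 ∧ f z1s = w1s ∧ f z2s = w2s)
    (θ : ℝ) (hθ : Irrational θ)
    (stp : A →ₗ[ℂ] A →ₗ[ℂ] A)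
    (hstp : ∀ (p q : ℤ × ℤ), ∀ a ∈ 𝒜 p, ∀ a' ∈ 𝒜 q, stp a a' = phase θ p q • (a * a'))
    (bmul : A ⊗[ℂ] A →ₗ[ℂ] A ⊗[ℂ] A →ₗ[ℂ] A ⊗[ℂ] A)
    (hbmul : ∀ (p p' u u' : ℤ × ℤ), ∀ a ∈ 𝒜 p, ∀ a' ∈ 𝒜 p', ∀ c ∈ 𝒜 u, ∀ c' ∈ 𝒜 u',
      bmul (a ⊗ₜ[ℂ] a') (c ⊗ₜ[ℂ] c')
        = rphase θ u p' • ((stp a c) ⊗ₜ[ℂ] (stp a' c')))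
    (φ : A ⊗[ℂ] A →ₗ[ℂ] A ⊗[ℂ] A)
    (hφ : ∀ (p q : ℤ × ℤ), ∀ a ∈ 𝒜 p, ∀ a' ∈ 𝒜 q,
      φ (a ⊗ₜ[ℂ] a') = phase θ p q • (a ⊗ₜ[ℂ] a')) :
    ∀ (K K2 Kθ K2θ : Submodule ℂ (A ⊗[ℂ] A)) (ωrep ωθrep : A ⊗[ℂ] A)
      (BdB : Submodule ℂ (A ⊗[ℂ] A)),
      K = LinearMap.ker (LinearMap.mul' ℂ A) →
      K2 = K * K →
      Kθ = LinearMap.ker (TensorProduct.lift stp) →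
      K2θ = Submodule.span ℂ {y : A ⊗[ℂ] A | ∃ x ∈ Kθ, ∃ x' ∈ Kθ, y = bmul x x'} →
      ωrep = z1s ⊗ₜ[ℂ] z1 - (z1s * z1) ⊗ₜ[ℂ] (1 : A)
        + (z2s ⊗ₜ[ℂ] z2 - (z2s * z2) ⊗ₜ[ℂ] (1 : A)) →
      ωθrep = (stp z1s 1) ⊗ₜ[ℂ] z1 - (stp z1s z1) ⊗ₜ[ℂ] (1 : A)
        + ((stp z2s 1) ⊗ₜ[ℂ] z2 - (stp z2s z2) ⊗ₜ[ℂ] (1 : A)) →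
      BdB = Submodule.span ℂ {y : A ⊗[ℂ] A | ∃ b ∈ totalDeg 𝒜 0, ∃ b' ∈ totalDeg 𝒜 0,
        y = b ⊗ₜ[ℂ] b' - (b * b') ⊗ₜ[ℂ] (1 : A)} →
      -- the gauge potential `α ∈ Ω¹(B)`, with homogeneous decomposition having a
      -- nonzero component of degree `(m',−m')` for some `m' ≠ 0`
      ∀ (αr : A ⊗[ℂ] A), αr ∈ BdB →
      ∀ (s : Finset ℤ) (αc : ℤ → A ⊗[ℂ] A),
        αr = ∑ m' ∈ s, αc m' →
        (∀ m' ∈ s, αc m' ∈ tensorDeg 𝒜 (m', -m')) →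
        (∃ m' ∈ s, m' ≠ 0 ∧ K2.mkQ (αc m') ≠ 0) →
      -- the left actions of `A` on `Ω¹(A)` and of `A_θ` on `Ω¹(A_θ)`
      ∀ (lact : A → ((A ⊗[ℂ] A) ⧸ K2) →ₗ[ℂ] ((A ⊗[ℂ] A) ⧸ K2)),
        (∀ (a : A) (x : A ⊗[ℂ] A), lact a (K2.mkQ x)
          = K2.mkQ (TensorProduct.map (LinearMap.mulLeft ℂ a) LinearMap.id x)) →
      ∀ (lactθ : A → ((A ⊗[ℂ] A) ⧸ K2θ) →ₗ[ℂ] ((A ⊗[ℂ] A) ⧸ K2θ)),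
        (∀ (a : A) (x : A ⊗[ℂ] A), lactθ a (K2θ.mkQ x)
          = K2θ.mkQ (TensorProduct.map (stp a) LinearMap.id x)) →
      -- the classical covariant derivative `D̄(a) = da − n a ω`, `ω = ω⁰ + α`
      ∀ (D : A →ₗ[ℂ] ((A ⊗[ℂ] A) ⧸ K2)),
        (∀ (n : ℤ), ∀ a ∈ totalDeg 𝒜 n,
          D a = K2.mkQ ((1 : A) ⊗ₜ[ℂ] a - a ⊗ₜ[ℂ] (1 : A))
            - (n : ℂ) • lact a (K2.mkQ (ωrep + αr))) →
      -- the deformed covariant derivative `D̄_θ(a) = d_θa − n a ⋆ ω_θ`, `ω_θ = ω⁰_θ + α`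
      ∀ (Dθ : A →ₗ[ℂ] ((A ⊗[ℂ] A) ⧸ K2θ)),
        (∀ (n : ℤ), ∀ a ∈ totalDeg 𝒜 n,
          Dθ a = K2θ.mkQ ((1 : A) ⊗ₜ[ℂ] a - a ⊗ₜ[ℂ] (1 : A))
            - (n : ℂ) • lactθ a (K2θ.mkQ (ωθrep + αr))) →
      -- the phase maps `L⁰ : A → A_θ` and `L¹ : Ω¹(A) → Ω¹(A_θ)` (the latter being
      -- the phase multiplication composed with `φ̄_θ⁻¹`)
      ∀ (L0 : A →ₗ[ℂ] A),
        (∀ (m n : ℤ), ∀ a ∈ 𝒜 (m + n, -m), L0 a = lphase θ m n • a) →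
      ∀ (φbar : ((A ⊗[ℂ] A) ⧸ K2θ) →ₗ[ℂ] ((A ⊗[ℂ] A) ⧸ K2)),
        (∀ x : A ⊗[ℂ] A, φbar (K2θ.mkQ x) = K2.mkQ (φ x)) →
      ∀ (L1 : ((A ⊗[ℂ] A) ⧸ K2) →ₗ[ℂ] ((A ⊗[ℂ] A) ⧸ K2θ)),
        (∀ (m n : ℤ), ∀ x ∈ tensorDeg 𝒜 (m + n, -m),
          φbar (L1 (K2.mkQ x)) = lphase θ m n • K2.mkQ x) →
      -- conclusion: the covariant derivatives are not intertwined
      ∃ (p : ℤ × ℤ) (a : A), a ∈ 𝒜 p ∧ Dθ (L0 a) ≠ L1 (D a) := by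
  intro K K2 Kθ K2θ ωrep ωθrep BdB _ _ _ _ hω hωθ hBdB αr hαr s αc hsum hαc hne lact hlact lactθ
    hlactθ D hD Dθ hDθ L0 hL0 φbar hφbar L1 hL1
  have hα : αr ∈ baseForms 𝒜 := hBdB.le hαr
  have hωθ_eq : ωθrep = ωrep := hωθ.trans
    ((IsStarProduct.star_hopfConnection hstp hz1 hz2 hz1s hz2s).trans hω.symm)
  have hω₀ : ωrep ∈ tensorDeg 𝒜 0 := hω ▸ hopfConnection_mem_tensorDeg hz1 hz2 hz1s hz2s
  have hφω₀ : φ ωrep = ωrep := hω ▸ IsPhaseMap.apply_hopfConnection hφ hz1 hz2 hz1s hz2s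
  have hφω : φ (ωrep + αr) = ωrep + αr := by
    rw [map_add, hφω₀, IsPhaseMap.apply_of_mem_baseForms hφ hα]
  have hωdeg : ωrep + αr ∈ totalDeg (tensorDeg 𝒜) 0 :=
    add_mem (le_totalDeg (add_zero 0) hω₀) (baseForms_le_totalDeg hα)
  simp only [map_mulLeft_id_apply] at hlact
  subst hsum hωθ_eq
  exact covariant_derivatives_not_intertwined_general
    (ideal_span_eq_top_of_sphere_relation hz1 hz2 hrel) hθ hstp hφ hω₀ hαc hne hωdeg hφω hlact
    hlactθ hD hDθ hL0 hφbar hL1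
end
end
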